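/- arXiv:1412.8143 — 6 statements merged into one kernel-verified Lean document; each statement's English description precedes it below -/
import Mathlib

section
/- Let a < b be real numbers, let r : ℝ → ℝ be twice differentiable and strictly positive on [a,b] and satisfy the catenary (minimal surface of revolution) equation r'(z)² + 1 − r''(z)·r(z) = 0 for all z ∈ (a,b), and let φ : ℝ → ℝ be twice differentiable on (a,b) with 0 < φ(z) < 1, φ'(z) < 0 and φ''(z) < 0 for all z ∈ (a,b). Then the function ρ := r·φ satisfies 1 + ρ'(z)² − ρ''(z)·ρ(z) > 0 for every z ∈ (a,b). -/
open Real Set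

/-! For `ρ > 0` one has `ρ'² - ρ''·ρ = -ρ²·(log ρ)''`. As `log` turns products into sums, the
expression `L ρ = ρ'² - ρ''·ρ` obeys `L (r·φ) = φ²·L r + r²·L φ`. The catenary equation is
`L r = -1`, and a positive concave `φ` has `L φ ≥ 0`, so `L (r·φ) ≥ -φ² > -1` when `|φ| < 1`. -/

open scoped Topology

section Laguerre

variable {𝕜 𝔸 : Type*} [NontriviallyNormedField 𝕜]

theorem deriv_deriv_mul [NormedRing 𝔸] [NormedAlgebra 𝕜 𝔸] {f g : 𝕜 → 𝔸} {z : 𝕜}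
    (hf : ∀ᶠ w in 𝓝 z, DifferentiableAt 𝕜 f w) (hf' : DifferentiableAt 𝕜 (deriv f) z)
    (hg : ∀ᶠ w in 𝓝 z, DifferentiableAt 𝕜 g w) (hg' : DifferentiableAt 𝕜 (deriv g) z) :
    deriv (deriv (f * g)) z =
      deriv (deriv f) z * g z + 2 * (deriv f z * deriv g z) + f z * deriv (deriv g) z := by
  have deriv_eq : deriv (f * g) =ᶠ[𝓝 z] deriv f * g + f * deriv g := by
    filter_upwards [hf, hg] with w hfw hgw using deriv_mul hfw hgw
  have hfz := hf.self_of_nhds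
  have hgz := hg.self_of_nhds
  rw [deriv_eq.deriv_eq, deriv_add (hf'.mul hgz) (hfz.mul hg'), deriv_mul hf' hgz,
    deriv_mul hfz hg', two_mul]
  abel

/-- The Laguerre expression `f'² - f''·f`, whose sign measures log-concavity of a positive `f`.
The numerator of the mean curvature of the surface of revolution with profile `ρ` is
`1 + laguerre ρ z`. -/
noncomputable def laguerre [NormedRing 𝔸] [NormedAlgebra 𝕜 𝔸] (f : 𝕜 → 𝔸) (z : 𝕜) : 𝔸 :=
  deriv f z ^ 2 - deriv (deriv f) z * f z

theorem laguerre_mul [NormedCommRing 𝔸] [NormedAlgebra 𝕜 𝔸] {f g : 𝕜 → 𝔸} {z : 𝕜}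
    (hf : ∀ᶠ w in 𝓝 z, DifferentiableAt 𝕜 f w) (hf' : DifferentiableAt 𝕜 (deriv f) z)
    (hg : ∀ᶠ w in 𝓝 z, DifferentiableAt 𝕜 g w) (hg' : DifferentiableAt 𝕜 (deriv g) z) :
    laguerre (f * g) z = g z ^ 2 * laguerre f z + f z ^ 2 * laguerre g z := by
  simp only [laguerre, deriv_deriv_mul hf hf' hg hg',
    deriv_mul hf.self_of_nhds hg.self_of_nhds, Pi.mul_apply]
  ring

theorem laguerre_nonneg_of_deriv_deriv_nonpos {f : ℝ → ℝ} {z : ℝ} (hf : 0 ≤ f z)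
    (hf'' : deriv (deriv f) z ≤ 0) : 0 ≤ laguerre f z :=
  sub_nonneg.2 ((mul_nonpos_of_nonpos_of_nonneg hf'' hf).trans (sq_nonneg _))

end Laguerre

theorem bent_catenoid_mean_convex_general {r φ : ℝ → ℝ} {z : ℝ}
    (hr : ∀ᶠ w in 𝓝 z, DifferentiableAt ℝ r w) (hr' : DifferentiableAt ℝ (deriv r) z)
    (hφ : ∀ᶠ w in 𝓝 z, DifferentiableAt ℝ φ w) (hφ' : DifferentiableAt ℝ (deriv φ) z)
    (hr_mean_convex : 0 ≤ 1 + laguerre r z) (hφ_log_concave : 0 ≤ laguerre φ z)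
    (hφ_lt : |φ z| < 1) :
    0 < 1 + laguerre (r * φ) z := by
  have hφ_sq : φ z ^ 2 < 1 := (sq_lt_one_iff_abs_lt_one _).2 hφ_lt
  calc
    0 < 1 - φ z ^ 2 := sub_pos.2 hφ_sq
    _ ≤ (1 - φ z ^ 2) + (φ z ^ 2 * (1 + laguerre r z) + r z ^ 2 * laguerre φ z) :=
      le_add_of_nonneg_right (by positivity)
    _ = 1 + laguerre (r * φ) z := by rw [laguerre_mul hr hr' hφ hφ']; ring

/-- Bending a catenoid (profile `r` solving `r'² + 1 - r''·r = 0`) by a decreasing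
concave factor `φ` with values in `(0,1)` keeps the quantity
`1 + ρ'² - ρ''·ρ` (a positive multiple of the mean curvature of the resulting
surface of revolution) strictly positive. -/
theorem bent_catenoid_mean_convex
    (a b : ℝ) (hab : a < b) (r φ : ℝ → ℝ)
    (hr : ∀ z ∈ Icc a b, DifferentiableAt ℝ r z)
    (hr' : ∀ z ∈ Icc a b, DifferentiableAt ℝ (deriv r) z)
    (hrpos : ∀ z ∈ Icc a b, 0 < r z)
    (hcat : ∀ z ∈ Ioo a b, (deriv r z) ^ 2 + 1 - deriv (deriv r) z * r z = 0)
    (hφ : ∀ z ∈ Ioo a b, DifferentiableAt ℝ φ z)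
    (hφ' : ∀ z ∈ Ioo a b, DifferentiableAt ℝ (deriv φ) z)
    (hφpos : ∀ z ∈ Ioo a b, 0 < φ z)
    (hφlt : ∀ z ∈ Ioo a b, φ z < 1)
    (hφdec : ∀ z ∈ Ioo a b, deriv φ z < 0)
    (hφconc : ∀ z ∈ Ioo a b, deriv (deriv φ) z < 0) :
    ∀ z ∈ Ioo a b,
      0 < 1 + (deriv (fun w => r w * φ w) z) ^ 2
          - deriv (deriv (fun w => r w * φ w)) z * (r z * φ z) := by
  intro z hz
  have near : ∀ᶠ w in 𝓝 z, w ∈ Ioo a b := Ioo_mem_nhds hz.1 hz.2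
  have catenary : 1 + laguerre r z = 0 := by
    rw [laguerre]
    linear_combination hcat z hz
  rw [add_sub_assoc]
  exact bent_catenoid_mean_convex_general
    (near.mono fun w hw => hr w (Ioo_subset_Icc_self hw)) (hr' z (Ioo_subset_Icc_self hz))
    (near.mono hφ) (hφ' z hz) catenary.ge
    (laguerre_nonneg_of_deriv_deriv_nonpos (hφpos z hz).le (hφconc z hz).le)
    (abs_lt.2 ⟨neg_one_lt_zero.trans (hφpos z hz), hφlt z hz⟩)
end

section
/- Define H : ℝ → ℝ by H(u) = 1/(1 + sin²u)^{3/2} + cos u/((3 + 2cos u)·√(1 + sin²u)). Then 5 + 2cos u − cos(2u) > 0 for all u, H(u) ≥ 0 for all real u, and H(u) = 0 if and only if u = π + 2kπ for some integer k. -/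
open Real

/-!
The torus is swept out by an ellipse with semi-axes `a`, `b` whose centre runs along a circle of
radius `R`; here `(R, a, b) = (3, 2, √2)`. Over a common denominator the mean curvature has
numerator `b` times `a R + 2 a² c - (a² - b²) c³`, where `c = cos u`. At `c = -1` the cubic takes
the value `a R - a² - b²`, so the inner equator is a minimal curve exactly when `a R = a² + b²`.
For this radius `1 + c` splits off, and the quadratic cofactor stays positive on `[-1, 1]` as long
as `a² < 3 b²`.
-/

/-- The squared speed `‖∂F/∂u‖²` of the meridian ellipse `u ↦ (R + a cos u, b sin u)`. -/
noncomputable def ellipseSpeedSq (a b u : ℝ) : ℝ :=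
  a ^ 2 * sin u ^ 2 + b ^ 2 * cos u ^ 2

/-- The principal curvature, in the direction of the meridian ellipse, of the torus of revolution
`F(u, v) = ((R + a cos u) cos v, (R + a cos u) sin v, b sin u)`, signed so that it is positive for
`a, b > 0`. -/
noncomputable def meridianCurvature (a b u : ℝ) : ℝ :=
  a * b / ellipseSpeedSq a b u ^ ((3 : ℝ) / 2)

/-- The principal curvature of the same torus in the direction of the circle of latitude, with the
same choice of normal as in `meridianCurvature`. -/
noncomputable def parallelCurvature (R a b u : ℝ) : ℝ :=
  b * cos u / ((R + a * cos u) * √(ellipseSpeedSq a b u))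

/-- The mean curvature of the same torus, normalized as the sum of the principal curvatures rather
than their average. -/
noncomputable def torusMeanCurvature (R a b u : ℝ) : ℝ :=
  meridianCurvature a b u + parallelCurvature R a b u

/-- The quadratic in `cos u` that is left of the mean curvature numerator, at the radius with
`a R = a² + b²`, after dividing out `1 + cos u`. -/
noncomputable def curvatureCofactor (a b u : ℝ) : ℝ :=
  a ^ 2 + b ^ 2 + (a ^ 2 - b ^ 2) * (cos u - cos u ^ 2)

section EllipticTorus

variable {R a b : ℝ}

lemma ellipseSpeedSq_pos (ha : a ≠ 0) (hb : b ≠ 0) (u : ℝ) : 0 < ellipseSpeedSq a b u := by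
  unfold ellipseSpeedSq
  rcases eq_or_ne (sin u) 0 with hs | hs
  · have hc : cos u ≠ 0 := fun hc ↦ by simpa [hs, hc] using sin_sq_add_cos_sq u
    positivity
  · positivity

lemma torusMeanCurvature_eq_div (ha : a ≠ 0) (hb : b ≠ 0) {u : ℝ} (hr : R + a * cos u ≠ 0) :
    torusMeanCurvature R a b u =
      b * (a * (R + a * cos u) + cos u * ellipseSpeedSq a b u) /
        ((R + a * cos u) * √(ellipseSpeedSq a b u) ^ 3) := by
  have hW := ellipseSpeedSq_pos ha hb u
  have hs : √(ellipseSpeedSq a b u) ≠ 0 := (sqrt_pos.2 hW).ne'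
  rw [torusMeanCurvature, meridianCurvature, parallelCurvature,
    rpow_div_two_eq_sqrt _ hW.le, rpow_ofNat]
  nth_rw 3 [← sq_sqrt hW.le]
  field_simp

lemma curvature_numerator_eq_mul_cofactor (hR : a * R = a ^ 2 + b ^ 2) (u : ℝ) :
    a * (R + a * cos u) + cos u * ellipseSpeedSq a b u =
      (1 + cos u) * curvatureCofactor a b u := by
  rw [ellipseSpeedSq, curvatureCofactor, sin_sq]
  linear_combination hR

lemma curvatureCofactor_pos (hb : b ≠ 0) (hab : a ^ 2 < 3 * b ^ 2) (u : ℝ) :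
    0 < curvatureCofactor a b u := by
  have hb2 : 0 < b ^ 2 := by positivity
  set t := cos u - cos u ^ 2 with ht
  have t_ge : -2 ≤ t := by nlinarith [neg_one_le_cos u, cos_le_one u]
  have t_lt : t < 1 := by nlinarith [sq_nonneg (cos u - 1 / 2)]
  have cofactor_eq : curvatureCofactor a b u = a ^ 2 * (1 + t) + b ^ 2 * (1 - t) := by
    rw [curvatureCofactor, ht]; ring
  rw [cofactor_eq]
  rcases le_or_gt 0 (1 + t) with h | h
  · have : 0 < 1 - t := by linarith
    positivity
  · calc 0 ≤ b ^ 2 * (2 * (t + 2)) := mul_nonneg hb2.le (by linarith)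
      _ = 3 * b ^ 2 * (1 + t) + b ^ 2 * (1 - t) := by ring
      _ < a ^ 2 * (1 + t) + b ^ 2 * (1 - t) := by
        gcongr ?_ + _
        exact mul_lt_mul_of_neg_right hab h

lemma add_mul_cos_pos (ha : 0 < a) (hb : b ≠ 0) (hR : a * R = a ^ 2 + b ^ 2) (u : ℝ) :
    0 < R + a * cos u := by
  refine pos_of_mul_pos_right (a := a) ?_ ha.le
  have hc : 0 ≤ 1 + cos u := by linarith [neg_one_le_cos u]
  calc 0 < a ^ 2 * (1 + cos u) + b ^ 2 := by positivity
    _ = a * (R + a * cos u) := by linear_combination -hR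

lemma exists_torusMeanCurvature_eq_one_add_cos_mul (ha : 0 < a) (hb : 0 < b)
    (hR : a * R = a ^ 2 + b ^ 2) (hab : a ^ 2 < 3 * b ^ 2) (u : ℝ) :
    ∃ q > 0, torusMeanCurvature R a b u = (1 + cos u) * q := by
  have hr := add_mul_cos_pos ha hb.ne' hR u
  have hW := ellipseSpeedSq_pos ha.ne' hb.ne' u
  have hQ := curvatureCofactor_pos hb.ne' hab u
  refine ⟨b * curvatureCofactor a b u /
    ((R + a * cos u) * √(ellipseSpeedSq a b u) ^ 3), by positivity, ?_⟩
  rw [torusMeanCurvature_eq_div ha.ne' hb.ne' hr.ne', curvature_numerator_eq_mul_cofactor hR]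
  ring

lemma torusMeanCurvature_nonneg (ha : 0 < a) (hb : 0 < b)
    (hR : a * R = a ^ 2 + b ^ 2) (hab : a ^ 2 < 3 * b ^ 2) (u : ℝ) :
    0 ≤ torusMeanCurvature R a b u := by
  obtain ⟨q, hq, h⟩ := exists_torusMeanCurvature_eq_one_add_cos_mul ha hb hR hab u
  rw [h]
  exact mul_nonneg (by linarith [neg_one_le_cos u]) hq.le

lemma torusMeanCurvature_eq_zero_iff (ha : 0 < a) (hb : 0 < b)
    (hR : a * R = a ^ 2 + b ^ 2) (hab : a ^ 2 < 3 * b ^ 2) (u : ℝ) :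
    torusMeanCurvature R a b u = 0 ↔ ∃ k : ℤ, u = π + 2 * k * π := by
  obtain ⟨q, hq, h⟩ := exists_torusMeanCurvature_eq_one_add_cos_mul ha hb hR hab u
  calc torusMeanCurvature R a b u = 0
      ↔ 1 + cos u = 0 := by rw [h, mul_eq_zero, or_iff_left hq.ne']
    _ ↔ cos u = -1 := by rw [add_comm, add_eq_zero_iff_eq_neg]
    _ ↔ ∃ k : ℤ, π + k * (2 * π) = u := cos_eq_neg_one_iff
    _ ↔ ∃ k : ℤ, u = π + 2 * k * π := by simp only [eq_comm, mul_left_comm, mul_assoc]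

theorem torus_mean_curvature_nonneg_and_zero_set_general (ha : 0 < a) (hb : 0 < b)
    (hR : a * R = a ^ 2 + b ^ 2) (hab : a ^ 2 < 3 * b ^ 2) :
    (∀ u, 0 < curvatureCofactor a b u) ∧
    (∀ u, 0 ≤ torusMeanCurvature R a b u) ∧
    (∀ u, torusMeanCurvature R a b u = 0 ↔ ∃ k : ℤ, u = π + 2 * k * π) :=
  ⟨curvatureCofactor_pos hb.ne' hab, torusMeanCurvature_nonneg ha hb hR hab,
    torusMeanCurvature_eq_zero_iff ha hb hR hab⟩

end EllipticTorus

lemma curvatureCofactor_two_sqrt_two (u : ℝ) :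
    curvatureCofactor 2 √2 u = 5 + 2 * cos u - cos (2 * u) := by
  rw [curvatureCofactor, sq_sqrt zero_le_two, cos_two_mul]
  ring

lemma ellipseSpeedSq_two_sqrt_two (u : ℝ) :
    ellipseSpeedSq 2 √2 u = 2 * (1 + sin u ^ 2) := by
  rw [ellipseSpeedSq, sq_sqrt zero_le_two, cos_sq']
  ring

lemma meridianCurvature_two_sqrt_two (u : ℝ) :
    meridianCurvature 2 √2 u = 1 / (1 + sin u ^ 2) ^ ((3 : ℝ) / 2) := by
  have two_rpow : (2 : ℝ) ^ ((3 : ℝ) / 2) = 2 * √2 := by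
    rw [rpow_div_two_eq_sqrt _ zero_le_two, rpow_ofNat, pow_succ, sq_sqrt zero_le_two]
  rw [meridianCurvature, ellipseSpeedSq_two_sqrt_two, mul_rpow zero_le_two (by positivity),
    two_rpow, div_mul_cancel_left₀ (by positivity), one_div]

lemma parallelCurvature_three_two_sqrt_two (u : ℝ) :
    parallelCurvature 3 2 √2 u = cos u / ((3 + 2 * cos u) * √(1 + sin u ^ 2)) := by
  rw [parallelCurvature, ellipseSpeedSq_two_sqrt_two, sqrt_mul zero_le_two, mul_left_comm,
    mul_div_mul_left _ _ (by positivity)]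

lemma torusMeanCurvature_three_two_sqrt_two (u : ℝ) :
    torusMeanCurvature 3 2 √2 u =
      1 / (1 + sin u ^ 2) ^ ((3 : ℝ) / 2) + cos u / ((3 + 2 * cos u) * √(1 + sin u ^ 2)) := by
  rw [torusMeanCurvature, meridianCurvature_two_sqrt_two, parallelCurvature_three_two_sqrt_two]

/-- The mean curvature of the torus of revolution with elliptic section is
nonnegative and vanishes exactly along the inner equator `u = π (mod 2π)`. -/
theorem torus_mean_curvature_nonneg_and_zero_set :
    (∀ u : ℝ, 0 < 5 + 2 * Real.cos u - Real.cos (2 * u)) ∧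
    (∀ u : ℝ, 0 ≤ 1 / (1 + Real.sin u ^ 2) ^ ((3:ℝ)/2)
        + Real.cos u / ((3 + 2 * Real.cos u) * Real.sqrt (1 + Real.sin u ^ 2))) ∧
    (∀ u : ℝ, (1 / (1 + Real.sin u ^ 2) ^ ((3:ℝ)/2)
        + Real.cos u / ((3 + 2 * Real.cos u) * Real.sqrt (1 + Real.sin u ^ 2)) = 0
      ↔ ∃ k : ℤ, u = Real.pi + 2 * k * Real.pi)) := by
  simpa only [curvatureCofactor_two_sqrt_two, torusMeanCurvature_three_two_sqrt_two] using
    torus_mean_curvature_nonneg_and_zero_set_general (R := 3) (a := 2) (b := √2)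
      two_pos (by positivity) (by norm_num) (by norm_num)
end

section
/- The quotient (∫₀^{2π} ((3 + 2cos u)/(1 + sin²u) + cos u) du) / (∫₀^{2π} √(1 + sin²u)·(3 + 2cos u) du) is greater than or equal to 1/2. Consequently, 1/2 − 2 times this quotient is strictly negative. -/
open Real intervalIntegral

/-!
Substituting `x = sin u` shows that every term `g (sin u) * cos u` integrates to zero over a period.
With `w = 1 + sin² u`, the quotient is therefore `(⨍ w⁻¹) / (⨍ √w)`, averages being taken over a
period. As `⨍ w = 3 / 2`, Jensen's inequality gives `⨍ w⁻¹ ≥ 2 / 3` and `⨍ √w ≤ √(3 / 2)`, and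
`√(3 / 2) ≤ 4 / 3`.
-/

-- For `c > 0` the left-hand side is the tangent line to the graph of `x⁻¹` at `x = c⁻¹`.
lemma two_mul_sub_sq_mul_le_inv {x : ℝ} (hx : 0 < x) (c : ℝ) : 2 * c - c ^ 2 * x ≤ x⁻¹ := by
  have h_sq : 0 ≤ x⁻¹ * (1 - c * x) ^ 2 := by positivity
  have h_expand : x⁻¹ * (1 - c * x) ^ 2 = x⁻¹ - (2 * c - c ^ 2 * x) := by
    field_simp
    ring
  linarith

section Average

open MeasureTheory

variable {α : Type*} [MeasurableSpace α] {μ : Measure α} [IsFiniteMeasure μ] {f : α → ℝ}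

lemma integrable_sqrt (hf : Integrable f μ) : Integrable (fun x => √(f x)) μ := by
  refine ((integrable_const 1).add hf.abs).mono'
    (continuous_sqrt.comp_aestronglyMeasurable hf.aestronglyMeasurable) (ae_of_all μ fun x => ?_)
  change ‖√(f x)‖ ≤ 1 + |f x|
  rw [norm_of_nonneg (sqrt_nonneg _)]
  exact sqrt_le_iff.2 ⟨by positivity, by nlinarith [le_abs_self (f x), abs_nonneg (f x)]⟩

variable [NeZero μ]

lemma average_sqrt_le_sqrt_average (hf₀ : ∀ᵐ x ∂μ, 0 ≤ f x) (hf : Integrable f μ) :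
    ⨍ x, √(f x) ∂μ ≤ √(⨍ x, f x ∂μ) :=
  strictConcaveOn_sqrt.concaveOn.le_map_average continuous_sqrt.continuousOn isClosed_Ici hf₀ hf
    (integrable_sqrt hf)

lemma inv_average_le_average_inv (hf₀ : ∀ᵐ x ∂μ, 0 < f x) (hf : Integrable f μ)
    (hf_inv : Integrable (fun x => (f x)⁻¹) μ) : (⨍ x, f x ∂μ)⁻¹ ≤ ⨍ x, (f x)⁻¹ ∂μ := by
  -- Mathlib's Jensen inequality needs a closed domain, so average the tangent line at the mean.
  set c := (⨍ x, f x ∂μ)⁻¹ with hc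
  have h_linear : Integrable (fun x => 2 * c - c ^ 2 * f x) μ :=
    (integrable_const _).sub (hf.const_mul _)
  calc
    c = 2 * c - c ^ 2 * ⨍ x, f x ∂μ := by
      rw [hc, pow_two, mul_assoc, ← div_eq_inv_mul]
      rcases eq_or_ne (⨍ x, f x ∂μ) 0 with h | h
      · simp [h]
      · field_simp
        norm_num
    _ = ⨍ x, (2 * c - c ^ 2 * f x) ∂μ := by
      simp only [average]
      rw [MeasureTheory.integral_sub (integrable_const _) (hf.to_average.const_mul _),
        MeasureTheory.integral_const, MeasureTheory.integral_const_mul, probReal_univ, one_smul]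
    _ ≤ ⨍ x, (f x)⁻¹ ∂μ :=
      MeasureTheory.integral_mono_ae h_linear.to_average hf_inv.to_average
        (Measure.smul_absolutelyContinuous.ae_le <|
          hf₀.mono fun x hx => two_mul_sub_sq_mul_le_inv hx c)

end Average

section EqualSine

variable {f g : ℝ → ℝ} {a b : ℝ}

lemma integral_comp_sin_mul_cos_eq_zero (hab : sin a = sin b) (hg : Continuous g) :
    ∫ u in a..b, g (sin u) * cos u = 0 := by
  simpa [hab] using integral_comp_mul_deriv (a := a) (b := b) (fun u _ => hasDerivAt_sin u)
    continuous_cos.continuousOn hg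

lemma integral_comp_sin_add_comp_sin_mul_cos (hab : sin a = sin b) (hf : Continuous f)
    (hg : Continuous g) :
    ∫ u in a..b, (f (sin u) + g (sin u) * cos u) = ∫ u in a..b, f (sin u) := by
  rw [integral_add (Continuous.intervalIntegrable (by fun_prop) _ _)
    (Continuous.intervalIntegrable (by fun_prop) _ _), integral_comp_sin_mul_cos_eq_zero hab hg,
    add_zero]

lemma integral_div_one_add_sin_sq_add_cos (hab : sin a = sin b) (R r : ℝ) :
    ∫ u in a..b, ((R + r * cos u) / (1 + sin u ^ 2) + cos u) =
      R * ∫ u in a..b, (1 + sin u ^ 2)⁻¹ := by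
  have h_inv : Continuous fun x : ℝ => (1 + x ^ 2)⁻¹ :=
    Continuous.inv₀ (by fun_prop) fun x => by positivity
  rw [← integral_const_mul, ← integral_comp_sin_add_comp_sin_mul_cos hab
    (h_inv.const_mul R) ((h_inv.const_mul r).add_const 1)]
  congr! 2 with u
  ring

lemma integral_sqrt_one_add_sin_sq_mul (hab : sin a = sin b) (R r : ℝ) :
    ∫ u in a..b, √(1 + sin u ^ 2) * (R + r * cos u) =
      R * ∫ u in a..b, √(1 + sin u ^ 2) := by
  have h_sqrt : Continuous fun x : ℝ => √(1 + x ^ 2) := by fun_prop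
  rw [← integral_const_mul, ← integral_comp_sin_add_comp_sin_mul_cos hab
    (h_sqrt.const_mul R) (h_sqrt.const_mul r)]
  congr! 2 with u
  ring

end EqualSine

lemma interval_average_one_add_sin_sq :
    ⨍ u in (0 : ℝ)..2 * π, (1 + sin u ^ 2) = 3 / 2 := by
  rw [interval_average_eq_div, integral_add (by simp)
    (Continuous.intervalIntegrable (by fun_prop) _ _), integral_sin_sq]
  simp only [integral_const, sin_zero, sin_two_pi, smul_eq_mul]
  field_simp
  ring

lemma interval_average_sqrt_one_add_sin_sq_le :
    ⨍ u in (0 : ℝ)..2 * π, √(1 + sin u ^ 2) ≤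
      2 * ⨍ u in (0 : ℝ)..2 * π, (1 + sin u ^ 2)⁻¹ := by
  have w_pos (u : ℝ) : 0 < 1 + sin u ^ 2 := by positivity
  have w_cont : Continuous fun u : ℝ => 1 + sin u ^ 2 := by fun_prop
  have : Fact (MeasureTheory.volume (Set.uIoc 0 (2 * π)) < ⊤) := ⟨measure_Ioc_lt_top⟩
  have : NeZero (MeasureTheory.volume (Set.uIoc 0 (2 * π))) := ⟨by simp [pi_ne_zero]⟩
  calc
    ⨍ u in (0 : ℝ)..2 * π, √(1 + sin u ^ 2) ≤ √(⨍ u in (0 : ℝ)..2 * π, (1 + sin u ^ 2)) :=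
      average_sqrt_le_sqrt_average (.of_forall fun u => (w_pos u).le) w_cont.integrableOn_uIoc
    _ = √(3 / 2) := by rw [interval_average_one_add_sin_sq]
    _ ≤ 2 * (3 / 2)⁻¹ := sqrt_le_iff.2 (by norm_num)
    _ = 2 * (⨍ u in (0 : ℝ)..2 * π, (1 + sin u ^ 2))⁻¹ := by
      rw [interval_average_one_add_sin_sq]
    _ ≤ 2 * ⨍ u in (0 : ℝ)..2 * π, (1 + sin u ^ 2)⁻¹ := by
      gcongr
      exact inv_average_le_average_inv (.of_forall w_pos) w_cont.integrableOn_uIoc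
        (w_cont.inv₀ fun u => (w_pos u).ne').integrableOn_uIoc

lemma integral_sqrt_one_add_sin_sq_le :
    ∫ u in (0 : ℝ)..2 * π, √(1 + sin u ^ 2) ≤
      2 * ∫ u in (0 : ℝ)..2 * π, (1 + sin u ^ 2)⁻¹ := by
  have h_average := interval_average_sqrt_one_add_sin_sq_le
  rwa [interval_average_eq_div, interval_average_eq_div, ← mul_div_assoc, sub_zero,
    div_le_div_iff_of_pos_right two_pi_pos] at h_average

lemma integral_sqrt_one_add_sin_sq_pos : 0 < ∫ u in (0 : ℝ)..2 * π, √(1 + sin u ^ 2) :=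
  intervalIntegral_pos_of_pos (Continuous.intervalIntegrable (by fun_prop) _ _)
    (fun u => by positivity) two_pi_pos

/-- The average mean curvature `H̄` of the torus of revolution with elliptic
section satisfies `H̄ ≥ 1/2`, hence `1/2 - 2H̄ < 0`: mean convexity is
instantaneously lost at the inner equator under the volume preserving mean
curvature flow. -/
theorem torus_average_mean_curvature_ge_half :
    (1:ℝ) / 2 ≤
      (∫ u in (0:ℝ)..(2 * Real.pi),
          ((3 + 2 * Real.cos u) / (1 + Real.sin u ^ 2) + Real.cos u)) /
        (∫ u in (0:ℝ)..(2 * Real.pi),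
          Real.sqrt (1 + Real.sin u ^ 2) * (3 + 2 * Real.cos u)) ∧
    (1:ℝ) / 2 - 2 *
      ((∫ u in (0:ℝ)..(2 * Real.pi),
          ((3 + 2 * Real.cos u) / (1 + Real.sin u ^ 2) + Real.cos u)) /
        (∫ u in (0:ℝ)..(2 * Real.pi),
          Real.sqrt (1 + Real.sin u ^ 2) * (3 + 2 * Real.cos u))) < 0 := by
  have h_sin : sin 0 = sin (2 * π) := by rw [sin_zero, sin_two_pi]
  rw [integral_div_one_add_sin_sq_add_cos h_sin, integral_sqrt_one_add_sin_sq_mul h_sin,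
    mul_div_mul_left _ _ three_ne_zero]
  have half_le :
      1 / 2 ≤ (∫ u in (0 : ℝ)..2 * π, (1 + sin u ^ 2)⁻¹) /
        ∫ u in (0 : ℝ)..2 * π, √(1 + sin u ^ 2) := by
    rw [le_div_iff₀ integral_sqrt_one_add_sin_sq_pos]
    linarith [integral_sqrt_one_add_sin_sq_le]
  exact ⟨half_le, by linarith⟩
end

section
/- Let r(u) = 2cosh²u and z(u) = 4 sinh u. Then for every real u: (z''(u)·r'(u) − r''(u)·z'(u)) / (r'(u)² + z'(u)²)^{3/2} = −1/(4 cosh³u), and z'(u) / (r(u)·√(r'(u)² + z'(u)²)) = 1/(2 cosh³u). -/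
open Real

/-!
Since `1 + sinh² = cosh²`, the curve `(a cosh² u, 2a sinh u)` has speed exactly `2a cosh² u`, so the
square root and the power `3/2` in the two curvatures disappear.
-/

/-- The principal curvature, in the direction of the profile, of the hypersurface obtained by
rotating the curve `(r, z)` around the `z`-axis, with respect to the outward normal for increasing
`z`. -/
noncomputable def profileCurvature (r z : ℝ → ℝ) (u : ℝ) : ℝ :=
  (deriv (deriv z) u * deriv r u - deriv (deriv r) u * deriv z u) /
    (deriv r u ^ 2 + deriv z u ^ 2) ^ ((3 : ℝ) / 2)

/-- The principal curvature, in the directions of rotation, of the hypersurface obtained by rotating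
the curve `(r, z)` around the `z`-axis, with respect to the outward normal for increasing `z`. -/
noncomputable def rotationalCurvature (r z : ℝ → ℝ) (u : ℝ) : ℝ :=
  deriv z u / (r u * √(deriv r u ^ 2 + deriv z u ^ 2))

section Speed

variable {r z : ℝ → ℝ} {u v : ℝ}

theorem profileCurvature_eq_of_speed (hv : 0 ≤ v) (h : deriv r u ^ 2 + deriv z u ^ 2 = v ^ 2) :
    profileCurvature r z u =
      (deriv (deriv z) u * deriv r u - deriv (deriv r) u * deriv z u) / v ^ 3 := by
  rw [profileCurvature, h, rpow_div_two_eq_sqrt _ (sq_nonneg v), sqrt_sq hv]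
  norm_cast

theorem rotationalCurvature_eq_of_speed (hv : 0 ≤ v)
    (h : deriv r u ^ 2 + deriv z u ^ 2 = v ^ 2) :
    rotationalCurvature r z u = deriv z u / (r u * v) := by
  rw [rotationalCurvature, h, sqrt_sq hv]

end Speed

/-- The radius of the parabolic profile `r = a + z² / (4a)` with neck radius `a`, parametrized by
`z = 2a sinh u`. -/
noncomputable def paraboloidRadius (a u : ℝ) : ℝ := a * cosh u ^ 2

/-- The height along the axis of the parabolic profile `r = a + z² / (4a)`, in the parametrization
for which the radius is `a cosh² u`. -/
noncomputable def paraboloidHeight (a u : ℝ) : ℝ := 2 * a * sinh u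

section Paraboloid

variable (a : ℝ)

theorem deriv_paraboloidHeight : deriv (paraboloidHeight a) = fun u => 2 * a * cosh u :=
  funext fun u => ((hasDerivAt_sinh u).const_mul (2 * a)).deriv

theorem deriv_deriv_paraboloidHeight (u : ℝ) :
    deriv (deriv (paraboloidHeight a)) u = 2 * a * sinh u := by
  rw [deriv_paraboloidHeight]
  exact ((hasDerivAt_cosh u).const_mul (2 * a)).deriv

theorem deriv_paraboloidRadius :
    deriv (paraboloidRadius a) = fun u => 2 * a * (cosh u * sinh u) := by
  funext u
  refine (((hasDerivAt_cosh u).pow 2).const_mul a).deriv.trans ?_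
  push_cast
  ring

theorem deriv_deriv_paraboloidRadius (u : ℝ) :
    deriv (deriv (paraboloidRadius a)) u = 2 * a * (sinh u ^ 2 + cosh u ^ 2) := by
  rw [deriv_paraboloidRadius, sq, sq]
  exact (((hasDerivAt_cosh u).mul (hasDerivAt_sinh u)).const_mul (2 * a)).deriv

theorem speed_sq_paraboloid (u : ℝ) :
    deriv (paraboloidRadius a) u ^ 2 + deriv (paraboloidHeight a) u ^ 2 =
      (2 * a * cosh u ^ 2) ^ 2 := by
  rw [deriv_paraboloidRadius, deriv_paraboloidHeight]
  linear_combination (-4 * a ^ 2 * cosh u ^ 2) * cosh_sq u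

theorem profileCurvature_numerator_paraboloid (u : ℝ) :
    deriv (deriv (paraboloidHeight a)) u * deriv (paraboloidRadius a) u -
        deriv (deriv (paraboloidRadius a)) u * deriv (paraboloidHeight a) u =
      -(4 * a ^ 2 * cosh u ^ 3) := by
  rw [deriv_deriv_paraboloidHeight, deriv_deriv_paraboloidRadius, deriv_paraboloidRadius,
    deriv_paraboloidHeight]
  ring

variable {a}

theorem profileCurvature_paraboloid (ha : 0 < a) (u : ℝ) :
    profileCurvature (paraboloidRadius a) (paraboloidHeight a) u =
      -(1 / (2 * a * cosh u ^ 3)) := by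
  rw [profileCurvature_eq_of_speed (by positivity) (speed_sq_paraboloid a u),
    profileCurvature_numerator_paraboloid]
  field_simp
  norm_num

theorem rotationalCurvature_paraboloid (ha : 0 < a) (u : ℝ) :
    rotationalCurvature (paraboloidRadius a) (paraboloidHeight a) u =
      1 / (a * cosh u ^ 3) := by
  rw [rotationalCurvature_eq_of_speed (by positivity) (speed_sq_paraboloid a u),
    deriv_paraboloidHeight, paraboloidRadius]
  field_simp

end Paraboloid

/-- Principal curvatures of the paraboloidal neck in `ℝ⁴` generated by rotating
the curve `(r(u), z(u)) = (2cosh²u, 4sinh u)`: the profile principal curvature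
equals `-1/(4cosh³u)` and the rotational ones equal `1/(2cosh³u)`. -/
theorem paraboloid_principal_curvatures (u : ℝ) :
    (deriv (deriv (fun w => 4 * Real.sinh w)) u * deriv (fun w => 2 * Real.cosh w ^ 2) u
        - deriv (deriv (fun w => 2 * Real.cosh w ^ 2)) u * deriv (fun w => 4 * Real.sinh w) u)
      / ((deriv (fun w => 2 * Real.cosh w ^ 2) u) ^ 2
          + (deriv (fun w => 4 * Real.sinh w) u) ^ 2) ^ ((3:ℝ)/2)
      = -(1 / (4 * Real.cosh u ^ 3)) ∧
    deriv (fun w => 4 * Real.sinh w) u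
      / ((2 * Real.cosh u ^ 2) *
          Real.sqrt ((deriv (fun w => 2 * Real.cosh w ^ 2) u) ^ 2
            + (deriv (fun w => 4 * Real.sinh w) u) ^ 2))
      = 1 / (2 * Real.cosh u ^ 3) := by
  have hz : (fun w => 4 * sinh w) = paraboloidHeight 2 := by
    funext w
    norm_num [paraboloidHeight]
  rw [hz, show (4 : ℝ) = 2 * 2 by norm_num]
  exact ⟨profileCurvature_paraboloid two_pos u, rotationalCurvature_paraboloid two_pos u⟩
end

section
/- Let r(u) = 2cosh²u and z(u) = 4 sinh u. Then for every real u: 2·r(u)·(r'(u)·z''(u) − r''(u)·z'(u)) + z'(u)·(r'(u)² + z'(u)²) = 0. -/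
open Real

/-!
Where the profile curve is a graph `r = f(z)`, the chain rule gives
`2r(r'z'' - r''z') + z'(r'² + z'²) = z'³ (1 + f'(z)² - 2 f(z) f''(z))` for every parametrization
`z(u)`, so scalar flatness is the equation `1 + f'² = 2 f f''`. It is solved by the parabolas
`f(x) = c + x² / (4c)`, whose directrix is the axis of rotation, and
`2 cosh² u = 2 + (4 sinh u)² / 8` puts the given curve on the one with `c = 2`.
-/

/-- The factor `S = 2r(r'z'' - r''z') + z'(r'² + z'²)` of the scalar curvature of the hypersurface
in `ℝ⁴` generated by rotating the curve `(r(u), z(u))` around the `x₄`-axis; where the curve is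
regular and `r > 0`, it is a positive multiple of `2λ₁ + λ₂`, with `λ₁`, `λ₂` the principal
curvatures and `2λ₂(2λ₁ + λ₂)` the scalar curvature. -/
noncomputable def rotationScalarFactor (r z : ℝ → ℝ) (u : ℝ) : ℝ :=
  2 * r u * (deriv r u * deriv (deriv z) u - deriv (deriv r) u * deriv z u)
    + deriv z u * (deriv r u ^ 2 + deriv z u ^ 2)

theorem rotationScalarFactor_comp {f z : ℝ → ℝ} {u : ℝ}
    (hf : ContDiffAt ℝ 2 f (z u)) (hz : ContDiffAt ℝ 2 z u) :
    rotationScalarFactor (f ∘ z) z u =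
      deriv z u ^ 3 * (1 + deriv f (z u) ^ 2 - 2 * f (z u) * deriv (deriv f) (z u)) := by
  have deriv_comp_eq : deriv (f ∘ z) u = deriv f (z u) * deriv z u :=
    deriv_comp u (hf.differentiableAt two_ne_zero) (hz.differentiableAt two_ne_zero)
  have deriv_deriv_comp_eq : deriv (deriv (f ∘ z)) u =
      deriv (deriv f) (z u) * deriv z u ^ 2 + deriv f (z u) * deriv (deriv z) u := by
    simpa only [iteratedDeriv_succ, iteratedDeriv_zero] using iteratedDeriv_comp_two hf hz
  rw [rotationScalarFactor, deriv_comp_eq, deriv_deriv_comp_eq, Function.comp_apply]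
  ring

/-- The parabola `r = c + z² / (4c)` with vertex at distance `c` from the axis `r = 0`, which is its
directrix. For `c > 0` it generates the paraboloidal neck of radius `c`; at `c = 0` division by zero
makes it the constant `0`. -/
noncomputable def paraboloidProfile (c x : ℝ) : ℝ :=
  c + x ^ 2 / (4 * c)

theorem contDiff_paraboloidProfile {n : WithTop ℕ∞} (c : ℝ) :
    ContDiff ℝ n (paraboloidProfile c) :=
  contDiff_const.add ((contDiff_id.pow 2).div_const (4 * c))

theorem deriv_paraboloidProfile (c : ℝ) : deriv (paraboloidProfile c) = fun x => x / (2 * c) := by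
  funext x
  refine (((hasDerivAt_pow 2 x).div_const (4 * c)).const_add c).deriv.trans ?_
  ring

theorem deriv_deriv_paraboloidProfile (c x : ℝ) :
    deriv (deriv (paraboloidProfile c)) x = 1 / (2 * c) := by
  rw [deriv_paraboloidProfile]
  exact ((hasDerivAt_id x).div_const (2 * c)).deriv

theorem one_add_deriv_paraboloidProfile_sq {c : ℝ} (hc : c ≠ 0) (x : ℝ) :
    1 + deriv (paraboloidProfile c) x ^ 2 =
      2 * paraboloidProfile c x * deriv (deriv (paraboloidProfile c)) x := by
  rw [deriv_deriv_paraboloidProfile, deriv_paraboloidProfile, paraboloidProfile]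
  field_simp
  ring

theorem paraboloidProfile_two_comp_four_mul_sinh :
    (paraboloidProfile 2 ∘ fun w => 4 * sinh w) = fun w => 2 * cosh w ^ 2 := by
  funext w
  rw [Function.comp_apply, paraboloidProfile, cosh_sq]
  ring

theorem paraboloid_scalar_flat_general {c : ℝ} (hc : c ≠ 0) {z : ℝ → ℝ} {u : ℝ}
    (hz : ContDiffAt ℝ 2 z u) :
    rotationScalarFactor (paraboloidProfile c ∘ z) z u = 0 := by
  rw [rotationScalarFactor_comp (contDiff_paraboloidProfile c).contDiffAt hz,
    one_add_deriv_paraboloidProfile_sq hc, sub_self, mul_zero]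

/-- The paraboloidal neck in `ℝ⁴` generated by rotating the curve
`(r(u), z(u)) = (2cosh²u, 4sinh u)` around the `x₄`-axis is scalar flat:
`2r(r'z'' - r''z') + z'(r'² + z'²) = 0`. -/
theorem paraboloid_scalar_flat (u : ℝ) :
    2 * (2 * Real.cosh u ^ 2) *
        (deriv (fun w => 2 * Real.cosh w ^ 2) u * deriv (deriv (fun w => 4 * Real.sinh w)) u
          - deriv (deriv (fun w => 2 * Real.cosh w ^ 2)) u * deriv (fun w => 4 * Real.sinh w) u)
      + deriv (fun w => 4 * Real.sinh w) u *
          ((deriv (fun w => 2 * Real.cosh w ^ 2) u) ^ 2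
            + (deriv (fun w => 4 * Real.sinh w) u) ^ 2) = 0 := by
  have hz : ContDiff ℝ 2 fun w => 4 * sinh w := contDiff_const.mul contDiff_sinh
  simpa only [paraboloidProfile_two_comp_four_mul_sinh, rotationScalarFactor] using
    paraboloid_scalar_flat_general two_ne_zero (hz.contDiffAt (x := u))
end

section
/- Let r(u) = 2cosh²u and z(u) = 4 sinh u, let I be an interval contained in (0, ∞), and let ψ : ℝ → ℝ be twice differentiable on I with 0 < ψ(u) < 1, ψ'(u) < 0 and ψ''(u) < 0 for all u ∈ I. Then the function ρ := r·ψ satisfies, for every u ∈ I: 2·ρ(u)·(ρ'(u)·z''(u) − ρ''(u)·z'(u)) + z'(u)·(ρ'(u)² + z'(u)²) > 0. -/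
open Real Set

/-!
For `ρ = r ψ`, expanding with the product rule and collecting terms gives
`S(ρ) = ψ² S(r) + (1 - ψ²) z'³ + 2 r ψ ψ' (r z'' - r' z') - 2 r² ψ ψ'' z' + r² ψ'² z'`.
If `S(r) ≥ 0`, `z' > 0` and `z' / r` is non-increasing, then every term is nonnegative for a
non-increasing concave factor `ψ` with values in `[0, 1)`, and the second one is positive. On the
paraboloidal neck `S(r) = 0` and `r z'' - r' z' = -8 cosh² u sinh u`.
-/

open scoped Topology

/-- Existence of the first two derivatives of `f` at `u`, with values `f₁` and `f₂`.
Differentiability is required near `u`, so that `hasDerivAt_deriv` does not involve the junk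
value of `deriv f`. -/
structure HasSecondDerivAt {𝕜 E : Type*} [NontriviallyNormedField 𝕜] [NormedAddCommGroup E]
    [NormedSpace 𝕜 E] (f : 𝕜 → E) (f₁ f₂ : E) (u : 𝕜) : Prop where
  eventually_differentiableAt : ∀ᶠ w in 𝓝 u, DifferentiableAt 𝕜 f w
  hasDerivAt : HasDerivAt f f₁ u
  hasDerivAt_deriv : HasDerivAt (deriv f) f₂ u

namespace HasSecondDerivAt

section NormedSpace

variable {𝕜 E : Type*} [NontriviallyNormedField 𝕜] [NormedAddCommGroup E] [NormedSpace 𝕜 E]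
  {f f' : 𝕜 → E} {f₁ f₂ : E} {u : 𝕜}

theorem of_eventually_hasDerivAt (hf : ∀ᶠ w in 𝓝 u, HasDerivAt f (f' w) w)
    (hf' : HasDerivAt f' f₂ u) : HasSecondDerivAt f (f' u) f₂ u where
  eventually_differentiableAt := hf.mono fun _ hw ↦ hw.differentiableAt
  hasDerivAt := hf.self_of_nhds
  hasDerivAt_deriv := hf'.congr_of_eventuallyEq (hf.mono fun _ hw ↦ hw.deriv)

-- `deriv f` stays nonzero near `u` by continuity, which rules out its junk value there.
theorem of_deriv_ne_zero (hf' : DifferentiableAt 𝕜 (deriv f) u) (hne : deriv f u ≠ 0) :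
    HasSecondDerivAt f (deriv f u) (deriv (deriv f) u) u where
  eventually_differentiableAt := (hf'.continuousAt.eventually_ne hne).mono fun _ hw ↦
    differentiableAt_of_deriv_ne_zero hw
  hasDerivAt := (differentiableAt_of_deriv_ne_zero hne).hasDerivAt
  hasDerivAt_deriv := hf'.hasDerivAt

theorem eventually_hasDerivAt (hf : HasSecondDerivAt f f₁ f₂ u) :
    ∀ᶠ w in 𝓝 u, HasDerivAt f (deriv f w) w :=
  hf.eventually_differentiableAt.mono fun _ hw ↦ hw.hasDerivAt

end NormedSpace

theorem mul {𝕜 A : Type*} [NontriviallyNormedField 𝕜] [NormedRing A] [NormedAlgebra 𝕜 A]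
    {f g : 𝕜 → A} {f₁ f₂ g₁ g₂ : A} {u : 𝕜} (hf : HasSecondDerivAt f f₁ f₂ u)
    (hg : HasSecondDerivAt g g₁ g₂ u) :
    HasSecondDerivAt (fun w ↦ f w * g w) (f₁ * g u + f u * g₁)
      (f₂ * g u + 2 * (f₁ * g₁) + f u * g₂) u := by
  have first : ∀ᶠ w in 𝓝 u,
      HasDerivAt (fun w ↦ f w * g w) (deriv f w * g w + f w * deriv g w) w := by
    filter_upwards [hf.eventually_hasDerivAt, hg.eventually_hasDerivAt] with w hfw hgw
    exact hfw.mul hgw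
  have second := (hf.hasDerivAt_deriv.mul hg.hasDerivAt).add
    (hf.hasDerivAt.mul hg.hasDerivAt_deriv)
  rw [hf.hasDerivAt.deriv, hg.hasDerivAt.deriv] at second
  have product := of_eventually_hasDerivAt first second
  rw [hf.hasDerivAt.deriv, hg.hasDerivAt.deriv] at product
  convert product using 1
  noncomm_ring

end HasSecondDerivAt

/-- The quantity `S(ρ) = 2ρ(ρ'z'' - ρ''z') + z'(ρ'² + z'²)` attached to the profile curve `(ρ, z)`
of a revolution hypersurface in `ℝ⁴`. It is a positive multiple of `2λ₁ + λ₂`, so its sign is that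
of the scalar curvature when `λ₂ > 0`. -/
noncomputable def scalarCurvatureFactor (ρ z : ℝ → ℝ) (u : ℝ) : ℝ :=
  2 * ρ u * (deriv ρ u * deriv (deriv z) u - deriv (deriv ρ) u * deriv z u)
    + deriv z u * (deriv ρ u ^ 2 + deriv z u ^ 2)

section Bending

variable {r z ψ : ℝ → ℝ} {r₁ r₂ z₁ z₂ ψ₁ ψ₂ u : ℝ}

theorem scalarCurvatureFactor_eq (hr : HasSecondDerivAt r r₁ r₂ u)
    (hz : HasSecondDerivAt z z₁ z₂ u) :
    scalarCurvatureFactor r z u =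
      2 * r u * (r₁ * z₂ - r₂ * z₁) + z₁ * (r₁ ^ 2 + z₁ ^ 2) := by
  rw [scalarCurvatureFactor, hr.hasDerivAt.deriv, hr.hasDerivAt_deriv.deriv,
    hz.hasDerivAt.deriv, hz.hasDerivAt_deriv.deriv]

theorem scalarCurvatureFactor_mul (hr : HasSecondDerivAt r r₁ r₂ u)
    (hz : HasSecondDerivAt z z₁ z₂ u) (hψ : HasSecondDerivAt ψ ψ₁ ψ₂ u) :
    scalarCurvatureFactor (fun w ↦ r w * ψ w) z u =
      ψ u ^ 2 * scalarCurvatureFactor r z u + (1 - ψ u ^ 2) * z₁ ^ 3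
        + 2 * r u * ψ u * ψ₁ * (r u * z₂ - r₁ * z₁)
        - 2 * r u ^ 2 * ψ u * ψ₂ * z₁ + r u ^ 2 * ψ₁ ^ 2 * z₁ := by
  rw [scalarCurvatureFactor_eq (hr.mul hψ) hz, scalarCurvatureFactor_eq hr hz]
  ring

-- Where `r u > 0`, the hypothesis `hratio` says that `(z' / r)' ≤ 0` at `u`.
theorem bent_paraboloid_positive_scalar_curvature_general (hr : HasSecondDerivAt r r₁ r₂ u)
    (hz : HasSecondDerivAt z z₁ z₂ u) (hψ : HasSecondDerivAt ψ ψ₁ ψ₂ u)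
    (hr_nonneg : 0 ≤ r u) (hz₁ : 0 < z₁) (hS : 0 ≤ scalarCurvatureFactor r z u)
    (hratio : r u * z₂ ≤ r₁ * z₁) (hψ_nonneg : 0 ≤ ψ u) (hψ_lt : ψ u < 1) (hψ₁ : ψ₁ ≤ 0)
    (hψ₂ : ψ₂ ≤ 0) :
    0 < scalarCurvatureFactor (fun w ↦ r w * ψ w) z u := by
  rw [scalarCurvatureFactor_mul hr hz hψ]
  have h_unbent : 0 ≤ ψ u ^ 2 * scalarCurvatureFactor r z u := by positivity
  have h_shrink : 0 < (1 - ψ u ^ 2) * z₁ ^ 3 :=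
    mul_pos (sub_pos.2 (pow_lt_one₀ hψ_nonneg hψ_lt two_ne_zero)) (pow_pos hz₁ 3)
  have h_slope : 0 ≤ 2 * r u * ψ u * ψ₁ * (r u * z₂ - r₁ * z₁) :=
    mul_nonneg_of_nonpos_of_nonpos (mul_nonpos_of_nonneg_of_nonpos (by positivity) hψ₁)
      (sub_nonpos.2 hratio)
  have h_concave : 2 * r u ^ 2 * ψ u * ψ₂ * z₁ ≤ 0 :=
    mul_nonpos_of_nonpos_of_nonneg (mul_nonpos_of_nonneg_of_nonpos (by positivity) hψ₂) hz₁.le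
  have h_square : 0 ≤ r u ^ 2 * ψ₁ ^ 2 * z₁ := by positivity
  linarith

end Bending

/-- The radius `r(u) = 2cosh²u` of the paraboloidal neck `r = 2 + z²/8`, in the parametrization
`z = 4 sinh u`. -/
noncomputable def neckRadius (u : ℝ) : ℝ := 2 * cosh u ^ 2

/-- The height `z(u) = 4 sinh u` along the axis of the paraboloidal neck `r = 2 + z²/8`. -/
noncomputable def neckHeight (u : ℝ) : ℝ := 4 * sinh u

theorem hasSecondDerivAt_neckRadius (u : ℝ) :
    HasSecondDerivAt neckRadius (4 * cosh u * sinh u) (4 * (sinh u ^ 2 + cosh u ^ 2)) u := by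
  have first (w : ℝ) : HasDerivAt neckRadius (4 * cosh w * sinh w) w :=
    (((hasDerivAt_cosh w).pow 2).const_mul 2).congr_deriv (by norm_num; ring)
  have second := ((hasDerivAt_cosh u).const_mul 4).mul (hasDerivAt_sinh u)
  exact .of_eventually_hasDerivAt (.of_forall first) (second.congr_deriv (by ring))

theorem hasSecondDerivAt_neckHeight (u : ℝ) :
    HasSecondDerivAt neckHeight (4 * cosh u) (4 * sinh u) u :=
  .of_eventually_hasDerivAt (.of_forall fun w ↦ (hasDerivAt_sinh w).const_mul 4)
    ((hasDerivAt_cosh u).const_mul 4)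

theorem scalarCurvatureFactor_neck (u : ℝ) :
    scalarCurvatureFactor neckRadius neckHeight u = 0 := by
  rw [scalarCurvatureFactor_eq (hasSecondDerivAt_neckRadius u) (hasSecondDerivAt_neckHeight u),
    neckRadius]
  linear_combination (-64 * cosh u ^ 3) * cosh_sq u

theorem neckRadius_mul_four_sinh_le {u : ℝ} (hu : 0 ≤ u) :
    neckRadius u * (4 * sinh u) ≤ 4 * cosh u * sinh u * (4 * cosh u) := by
  have h : 0 ≤ cosh u ^ 2 * sinh u := mul_nonneg (sq_nonneg _) (sinh_nonneg_iff.2 hu)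
  rw [neckRadius]
  linarith

/-- Bending the scalar-flat paraboloidal neck `(r(u), z(u)) = (2cosh²u, 4sinh u)`
by a decreasing concave factor `ψ` with values in `(0,1)` produces strictly
positive scalar curvature: `S(ρ) = 2ρ(ρ'z'' - ρ''z') + z'(ρ'² + z'²) > 0` for
`ρ = r·ψ`. -/
theorem bent_paraboloid_positive_scalar_curvature
    (I : Set ℝ) (hIint : I.OrdConnected) (hIpos : I ⊆ Ioi 0) (ψ : ℝ → ℝ)
    (hψ : ∀ u ∈ I, DifferentiableAt ℝ ψ u)
    (hψ' : ∀ u ∈ I, DifferentiableAt ℝ (deriv ψ) u)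
    (hψpos : ∀ u ∈ I, 0 < ψ u)
    (hψlt : ∀ u ∈ I, ψ u < 1)
    (hψdec : ∀ u ∈ I, deriv ψ u < 0)
    (hψconc : ∀ u ∈ I, deriv (deriv ψ) u < 0) :
    ∀ u ∈ I,
      0 < 2 * ((2 * Real.cosh u ^ 2) * ψ u) *
            (deriv (fun w => 2 * Real.cosh w ^ 2 * ψ w) u
                * deriv (deriv (fun w => 4 * Real.sinh w)) u
              - deriv (deriv (fun w => 2 * Real.cosh w ^ 2 * ψ w)) u
                * deriv (fun w => 4 * Real.sinh w) u)
          + deriv (fun w => 4 * Real.sinh w) u *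
              ((deriv (fun w => 2 * Real.cosh w ^ 2 * ψ w) u) ^ 2
                + (deriv (fun w => 4 * Real.sinh w) u) ^ 2) := by
  intro u hu
  have hr : 0 ≤ neckRadius u := by unfold neckRadius; positivity
  have hz₁ : 0 < 4 * cosh u := by positivity
  have hψ_second : HasSecondDerivAt ψ (deriv ψ u) (deriv (deriv ψ) u) u :=
    .of_deriv_ne_zero (hψ' u hu) (hψdec u hu).ne
  exact bent_paraboloid_positive_scalar_curvature_general (hasSecondDerivAt_neckRadius u)
    (hasSecondDerivAt_neckHeight u) hψ_second hr hz₁ (scalarCurvatureFactor_neck u).ge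
    (neckRadius_mul_four_sinh_le (hIpos hu).le) (hψpos u hu).le (hψlt u hu) (hψdec u hu).le
    (hψconc u hu).le
end
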